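/- (Proinov-type transference) Let d ∈ ℕ and let S_d = (y_k)_{k≥0}, y_k = (y_{1,k},…,y_{d,k}), be an arbitrary sequence in [0,1)^d. Then for every N ∈ ℕ there exists n ∈ {1,2,…,N} such that n·‖D_{S_d}^n | 𝒟_0^d‖ + 1 ≥ N·‖D_{P_{N,d+1}} | 𝒟_0^{d+1}‖, where P_{N,d+1} is the finite point set in [0,1)^{d+1} consisting of the N points x_k = (y_{1,k},…,y_{d,k}, k/N) for k = 0,1,…,N−1. -/

import Mathlib

open MeasureTheory
open scoped ENNReal

noncomputable section

/-- The closed unit cube `[0,1]^d`. -/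
def unitCube (d : ℕ) : Set (Fin d → ℝ) := Set.univ.pi fun _ => Set.Icc (0:ℝ) 1

/-- The half-open unit cube `[0,1)^d`. -/
def unitCubeIco (d : ℕ) : Set (Fin d → ℝ) := Set.univ.pi fun _ => Set.Ico (0:ℝ) 1

/-- Discrepancy function of the first `N` points of the sequence `S` in `[0,1)^d`. -/
def discSeq (d : ℕ) (S : ℕ → Fin d → ℝ) (N : ℕ) (x : Fin d → ℝ) : ℝ :=
  (Nat.card {k : Fin N // ∀ i, S k i < x i} : ℝ) / N - ∏ i, x i

/-- One-dimensional Haar function `h_{j,m}`, with `h_{-1,0} = 1_{[0,1)}`. -/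
def haar1 (j : ℤ) (m : ℕ) (x : ℝ) : ℝ :=
  if j = -1 then (if 0 ≤ x ∧ x < 1 then 1 else 0)
  else if (m:ℝ)/2^j.toNat ≤ x ∧ x < ((m:ℝ) + 1/2)/2^j.toNat then 1
  else if ((m:ℝ) + 1/2)/2^j.toNat ≤ x ∧ x < ((m:ℝ)+1)/2^j.toNat then -1
  else 0

/-- `d`-dimensional (tensor product) Haar function. -/
def haarFn (d : ℕ) (j : Fin d → ℤ) (m : Fin d → ℕ) (x : Fin d → ℝ) : ℝ :=
  ∏ i, haar1 (j i) (m i) (x i)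

/-- Haar coefficient `⟨f, h_{j,m}⟩`. -/
def haarCoeff (d : ℕ) (f : (Fin d → ℝ) → ℝ) (j : Fin d → ℤ) (m : Fin d → ℕ) : ℝ :=
  ∫ x in unitCube d, f x * haarFn d j m x

/-- `|j| = max(j₁,0) + ⋯ + max(j_d,0)`. -/
def jnorm (d : ℕ) (j : Fin d → ℤ) : ℕ := ∑ i, (j i).toNat

/-- One-dimensional dyadic interval `I_{j,m}`. -/
def dyadicI (j : ℤ) (m : ℕ) : Set ℝ :=
  Set.Ico ((m:ℝ)/2^j.toNat) (((m:ℝ)+1)/2^j.toNat)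

/-- `d`-dimensional dyadic box `I_{j,m}`. -/
def dyadicBox (d : ℕ) (j : Fin d → ℤ) (m : Fin d → ℕ) : Set (Fin d → ℝ) :=
  Set.univ.pi fun i => dyadicI (j i) (m i)

/-- The index set `𝔻_j` as a finset. -/
def Dfin (d : ℕ) (j : Fin d → ℤ) : Finset (Fin d → ℕ) :=
  Fintype.piFinset fun i => Finset.range (2 ^ (j i).toNat)

/-- The index set `𝔻_j` for `j ∈ ℕ₀^d`. -/
def Dfin0 (d : ℕ) (j : Fin d → ℕ) : Finset (Fin d → ℕ) :=
  Fintype.piFinset fun i => Finset.range (2 ^ (j i))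

/-- Coordinate of the `k`-th point of a digital sequence over `𝔽₂` with generating
matrix `C` (`0`-based rows and columns). -/
def digitalCoord (C : ℕ → ℕ → ZMod 2) (k : ℕ) : ℝ :=
  ∑' i : ℕ,
    (((∑ ℓ ∈ Finset.range (k+1), C i ℓ * (if k.testBit ℓ then 1 else 0)).val : ℕ) : ℝ) / 2 ^ (i + 1)

/-- The digital sequence over `𝔽₂` generated by matrices `C 0, …, C (d-1)`. -/
def digitalSeq (d : ℕ) (C : Fin d → ℕ → ℕ → ZMod 2) : ℕ → Fin d → ℝ :=
  fun k j => digitalCoord (C j) k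

/-- `C 0, …, C (d-1)` generate an order `α` digital `(t,n,d)`-net over `𝔽₂`,
where the relevant submatrices have `q` rows (`q ≥ αn`) and `n` columns.
Row indices are `0`-based; the `1`-based row value of row `r` is `r+1`. -/
def IsOrderNet (α n t q d : ℕ) (C : Fin d → ℕ → ℕ → ZMod 2) : Prop :=
  ∀ (ν : Fin d → ℕ) (r : ∀ j : Fin d, Fin (ν j) → ℕ),
    (∀ j, StrictAnti (r j)) →
    (∀ j l, r j l < q) →
    (∑ j, ∑ l ∈ Finset.univ.filter (fun l : Fin (ν j) => (l:ℕ) < α), (r j l + 1)) ≤ α * n - t →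
    LinearIndependent (ZMod 2)
      (fun p : Σ j : Fin d, Fin (ν j) => fun col : Fin n => C p.1 (r p.1 p.2) col)

/-- `C 0, …, C (d-1)` generate an order `α` digital `(t,d)`-sequence over `𝔽₂`. -/
def IsOrderSeq (α t d : ℕ) (C : Fin d → ℕ → ℕ → ZMod 2) : Prop :=
  ∀ n : ℕ, t < α * n → IsOrderNet α n t (α * n) d C

/-- The condition `e_{i,k,ℓ} = 0` for all `k > 2ℓ` (in `1`-based indexing). -/
def Triangular2 (d : ℕ) (E : Fin d → ℕ → ℕ → ZMod 2) : Prop :=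
  ∀ i k ℓ, 2 * (ℓ + 1) < k + 1 → E i k ℓ = 0

open scoped Classical in
/-- The quantity `λ(U)⁻¹ ∑_{j ∈ ℕ₀^d} 2^{|j|} ∑_{m : I_{j,m} ⊆ U} ⟨f,h_{j,m}⟩²`. -/
def bmoSq (d : ℕ) (f : (Fin d → ℝ) → ℝ) (U : Set (Fin d → ℝ)) : ℝ≥0∞ :=
  (volume U)⁻¹ * ∑' j : Fin d → ℕ, ∑ m ∈ Dfin0 d j,
    if dyadicBox d (fun i => (j i : ℤ)) m ⊆ U then
      (2:ℝ≥0∞) ^ (∑ i, j i) * ENNReal.ofReal ((haarCoeff d f (fun i => (j i : ℤ)) m)^2)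
    else 0

/-- The BMO (semi-)norm `‖f | bmo^d‖`. -/
def bmoNorm (d : ℕ) (f : (Fin d → ℝ) → ℝ) : ℝ≥0∞ :=
  (⨆ U : {U : Set (Fin d → ℝ) // MeasurableSet U ∧ U ⊆ unitCubeIco d ∧ 0 < volume U},
    bmoSq d f U.1) ^ (1/2 : ℝ)

/-- The Orlicz norm of `f` on `[0,1)^d` with respect to the Young function `ψ`,
with the convention `inf ∅ = ∞`. -/
def orliczNorm (d : ℕ) (ψ : ℝ → ℝ) (f : (Fin d → ℝ) → ℝ) : ℝ≥0∞ :=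
  ⨅ K : {K : ℝ // 0 < K ∧ ∫ x in unitCubeIco d, ψ (|f x| / K) ≤ 1}, ENNReal.ofReal K.1

/-- `ψ` is a Young function which coincides with `exp(x^β) - 1` for all large `x`. -/
def IsYoungExp (β : ℝ) (ψ : ℝ → ℝ) : Prop :=
  ConvexOn ℝ (Set.Ici 0) ψ ∧ ψ 0 = 0 ∧ (∀ x : ℝ, 0 < x → 0 < ψ x) ∧
    ∃ x₀ : ℝ, ∀ x ≥ x₀, ψ x = Real.exp (x ^ β) - 1

/-- The set of valid Haar indices `j ∈ ℕ_{-1}^d`. -/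
def validJ (d : ℕ) : Set (Fin d → ℤ) := {j | ∀ i, -1 ≤ j i}

/-- The `q`-th power of the Haar-characterization of the `S^s_{p,q}B` norm:
`∑_{j ∈ ℕ_{-1}^d} 2^{|j|(s-1/p+1)q} (∑_{m ∈ 𝔻_j} |⟨f,h_{j,m}⟩|^p)^{q/p}`. -/
def besovSum (d : ℕ) (p q s : ℝ) (f : (Fin d → ℝ) → ℝ) : ℝ≥0∞ :=
  ∑' j : validJ d,
    ENNReal.ofReal ((2:ℝ) ^ ((jnorm d j.1 : ℝ) * (s - 1/p + 1) * q) *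
      (∑ m ∈ Dfin d j.1, |haarCoeff d f j.1 m| ^ p) ^ (q / p))

/-- Coordinate of the `k`-th point of a digital net with `q × n` generating matrix `C`. -/
def netCoord (q n : ℕ) (C : ℕ → ℕ → ZMod 2) (k : ℕ) : ℝ :=
  ∑ i ∈ Finset.range q,
    ((∑ ℓ ∈ Finset.range n, C i ℓ * (if k.testBit ℓ then 1 else 0)).val : ℝ) / 2 ^ (i + 1)

/-- `n_{μ+1}`, with the convention `n_{r+1} = log₂ N` (indices `1`-based, `n` stored `0`-based). -/
def nExt (r : ℕ) (n : Fin r → ℕ) (N : ℕ) (μ : ℕ) : ℝ :=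
  if h : μ < r then (n ⟨μ, h⟩ : ℝ) else Real.logb 2 N

/-- `n_μ`, with the convention `n_0 = 0` (indices `1`-based, `n` stored `0`-based). -/
def nPrev (r : ℕ) (n : Fin r → ℕ) (μ : ℕ) : ℝ :=
  if h : 1 ≤ μ ∧ μ ≤ r then (n ⟨μ - 1, by omega⟩ : ℝ) else 0

/-- The dyadic square function `Sf`, valued in `ℝ≥0∞`. -/
def sqFnE (d : ℕ) (f : (Fin d → ℝ) → ℝ) (x : Fin d → ℝ) : ℝ≥0∞ :=
  (∑' j : validJ d, ∑ m ∈ Dfin d j.1,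
    ENNReal.ofReal ((2:ℝ) ^ (2 * jnorm d j.1) * (haarCoeff d f j.1 m)^2 *
      (dyadicBox d j.1 m).indicator (fun _ => (1:ℝ)) x)) ^ (1/2 : ℝ)

/-- `sup_{p > 1} p^{-1/β} ‖f‖_{L_p([0,1]^d)}`. -/
def supLp (d : ℕ) (β : ℝ) (f : (Fin d → ℝ) → ℝ) : ℝ≥0∞ :=
  ⨆ p : {p : ℝ // 1 < p},
    ENNReal.ofReal ((p:ℝ) ^ (-(1/β))) * eLpNorm f (ENNReal.ofReal (p:ℝ)) (volume.restrict (unitCube d))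

/-- `‖f | 𝒟₀^d‖² = ∑_{j ∈ ℕ₀^d} 2^{|j|} ∑_{m ∈ 𝔻_j} ⟨f,h_{j,m}⟩²`. -/
def dNormSq (d : ℕ) (f : (Fin d → ℝ) → ℝ) : ℝ≥0∞ :=
  ∑' j : Fin d → ℕ, ∑ m ∈ Dfin0 d j,
    ENNReal.ofReal ((2:ℝ) ^ (∑ i, j i) * (haarCoeff d f (fun i => (j i : ℤ)) m)^2)

/-- `‖f | 𝒟₀^d‖`. -/
def dNorm (d : ℕ) (f : (Fin d → ℝ) → ℝ) : ℝ≥0∞ := (dNormSq d f) ^ (1/2 : ℝ)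


/-- Integral of `G` over a dyadic interval. -/
def dyInt (G : ℝ → ℝ) (j m : ℕ) : ℝ := ∫ t in ((m:ℝ)/2^j)..(((m:ℝ)+1)/2^j), G t

lemma dyInt_split (G : ℝ → ℝ) (hG : Integrable G) (j m : ℕ) :
    dyInt G j m = dyInt G (j+1) (2*m) + dyInt G (j+1) (2*m+1) := by
  unfold dyInt
  have e1 : (((2*m:ℕ):ℝ))/2^(j+1) = (m:ℝ)/2^j := by
    push_cast; rw [pow_succ]; field_simp
  have e2 : (((2*m+1:ℕ):ℝ)+1)/2^(j+1) = ((m:ℝ)+1)/2^j := by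
    push_cast; rw [pow_succ]; field_simp; ring
  have e3 : (((2*m+1:ℕ):ℝ)) = ((2*m:ℕ):ℝ)+1 := by push_cast; ring
  rw [e2, ← e1, e3, intervalIntegral.integral_add_adjacent_intervals]
  · exact hG.intervalIntegrable
  · exact hG.intervalIntegrable

lemma coeff_eq (G : ℝ → ℝ) (hG : Integrable G) (j m : ℕ) :
    ∫ t, G t * haar1 (j:ℤ) m t = dyInt G (j+1) (2*m) - dyInt G (j+1) (2*m+1) := by
  have e1 : (((2*m:ℕ):ℝ))/2^(j+1) = (m:ℝ)/2^j := by
    push_cast; rw [pow_succ]; field_simp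
  have e2 : (((2*m+1:ℕ):ℝ)+1)/2^(j+1) = ((m:ℝ)+1)/2^j := by
    push_cast; rw [pow_succ]; field_simp; ring
  have e3 : (((2*m+1:ℕ):ℝ)) = ((2*m:ℕ):ℝ)+1 := by push_cast; ring
  have e4 : (((2*m:ℕ):ℝ)+1)/2^(j+1) = ((m:ℝ)+1/2)/2^j := by
    push_cast; rw [pow_succ]; field_simp
  unfold dyInt
  rw [e2, e3, e1, e4]
  have hp : (0:ℝ) < 2^j := by positivity
  have l1 : (m:ℝ)/2^j ≤ ((m:ℝ)+1/2)/2^j := by gcongr; linarith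
  have l2 : ((m:ℝ)+1/2)/2^j ≤ ((m:ℝ)+1)/2^j := by gcongr; linarith
  rw [intervalIntegral.integral_of_le l1, intervalIntegral.integral_of_le l2,
    ← integral_Ico_eq_integral_Ioc, ← integral_Ico_eq_integral_Ioc,
    ← integral_indicator measurableSet_Ico, ← integral_indicator measurableSet_Ico,
    ← integral_sub (hG.indicator measurableSet_Ico) (hG.indicator measurableSet_Ico)]
  congr 1
  ext t
  have hj : ((j:ℤ) = -1) = False := by simp
  simp only [haar1, hj, if_false, Int.toNat_natCast, Set.indicator, Set.mem_Ico]
  split_ifs with h1 h2 h3 <;> first | (exfalso; linarith [h1.2, h2.1]) | simp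

lemma dyInt_sq (G : ℝ → ℝ) (hG : Integrable G) (hG2 : Integrable fun t => G t ^ 2) (j m : ℕ) :
    (2:ℝ)^j * dyInt G j m ^ 2 ≤ dyInt (fun t => G t ^ 2) j m := by
  have hp : (0:ℝ) < 2^j := by positivity
  have l1 : (m:ℝ)/2^j ≤ ((m:ℝ)+1)/2^j := by gcongr; linarith
  set c : ℝ := 2^j * dyInt G j m with hc
  have h0 : 0 ≤ ∫ t in ((m:ℝ)/2^j)..(((m:ℝ)+1)/2^j), (G t ^ 2 - (2 * c) * G t + c^2) := by
    apply intervalIntegral.integral_nonneg l1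
    intro t _
    nlinarith [sq_nonneg (G t - c)]
  rw [intervalIntegral.integral_add
      (hG2.intervalIntegrable.sub (hG.intervalIntegrable.const_mul _)) (by simp),
    intervalIntegral.integral_sub hG2.intervalIntegrable (hG.intervalIntegrable.const_mul _),
    intervalIntegral.integral_const_mul, intervalIntegral.integral_const] at h0
  change 0 ≤ dyInt (fun t => G t ^ 2) j m - 2 * c * dyInt G j m + _ at h0
  have : (((m:ℝ)+1)/2^j - (m:ℝ)/2^j) • c^2 = c * dyInt G j m := by
    rw [hc, smul_eq_mul]; field_simp; ring
  rw [this] at h0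
  have : (2:ℝ)^j * dyInt G j m ^ 2 = c * dyInt G j m := by rw [hc]; ring
  linarith

lemma sum_range_pow_succ (f : ℕ → ℝ) (n : ℕ) :
    ∑ m ∈ Finset.range (2*n), f m = ∑ m ∈ Finset.range n, (f (2*m) + f (2*m+1)) := by
  induction n with
  | zero => simp
  | succ n ih => rw [Finset.sum_range_succ, ← ih, Nat.mul_succ, Finset.sum_range_succ,
      Finset.sum_range_succ]; ring

lemma bessel_tel (G : ℝ → ℝ) (hG : Integrable G) (J : ℕ) :
    ∑ j ∈ Finset.range J, ∑ m ∈ Finset.range (2^j), (2:ℝ)^j * (∫ t, G t * haar1 (j:ℤ) m t)^2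
      ≤ ∑ m ∈ Finset.range (2^J), (2:ℝ)^J * dyInt G J m ^ 2 := by
  induction J with
  | zero => simp; positivity
  | succ J ih =>
    rw [Finset.sum_range_succ, show 2^(J+1) = 2*2^J by ring, sum_range_pow_succ]
    refine (add_le_add_left ih _).trans ?_
    rw [← Finset.sum_add_distrib]
    apply le_of_eq
    apply Finset.sum_congr rfl
    intro m _
    rw [coeff_eq G hG, dyInt_split G hG J m]
    ring

lemma bessel_real (G : ℝ → ℝ) (hG : Integrable G) (hG2 : Integrable fun t => G t ^ 2) (J : ℕ) :
    ∑ j ∈ Finset.range J, ∑ m ∈ Finset.range (2^j), (2:ℝ)^j * (∫ t, G t * haar1 (j:ℤ) m t)^2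
      ≤ ∫ t in Set.Ioc (0:ℝ) 1, G t ^ 2 := by
  refine (bessel_tel G hG J).trans ((Finset.sum_le_sum fun m _ => dyInt_sq G hG hG2 J m).trans ?_)
  have := intervalIntegral.sum_integral_adjacent_intervals (f := fun t => G t ^ 2) (μ := volume)
    (a := fun k : ℕ => (k:ℝ)/2^J) (n := 2^J) (fun k _ => hG2.intervalIntegrable)
  unfold dyInt
  push_cast at this
  rw [this]
  simp [intervalIntegral.integral_of_le]

lemma bessel_enn (g : ℝ → ℝ) (hg : Measurable g) (C : ℝ) (hC : ∀ t ∈ Set.Icc (0:ℝ) 1, |g t| ≤ C) :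
    ∑' j : ℕ, ∑ m ∈ Finset.range (2^j),
      ENNReal.ofReal ((2:ℝ)^j * (∫ t in Set.Icc (0:ℝ) 1, g t * haar1 (j:ℤ) m t)^2)
      ≤ ∫⁻ t in Set.Ioc (0:ℝ) 1, ENNReal.ofReal (g t ^ 2) := by
  set G : ℝ → ℝ := (Set.Icc (0:ℝ) 1).indicator g with hGdef
  have hGi : Integrable G := by
    rw [hGdef, integrable_indicator_iff measurableSet_Icc]
    refine Measure.integrableOn_of_bounded (M := C) (by simp) hg.aestronglyMeasurable ?_
    exact (ae_restrict_iff' measurableSet_Icc).2 (Filter.Eventually.of_forall hC)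
  have hGsq : (fun t => G t ^ 2) = (Set.Icc (0:ℝ) 1).indicator (fun t => g t ^ 2) := by
    ext t; simp only [hGdef, Set.indicator]; split_ifs <;> simp
  have hG2 : Integrable fun t => G t ^ 2 := by
    rw [hGsq, integrable_indicator_iff measurableSet_Icc]
    refine Measure.integrableOn_of_bounded (M := C^2) (by simp)
      (hg.pow_const 2).aestronglyMeasurable ?_
    refine (ae_restrict_iff' measurableSet_Icc).2 (Filter.Eventually.of_forall fun t ht => ?_)
    rw [Real.norm_eq_abs, abs_pow]
    exact pow_le_pow_left₀ (abs_nonneg _) (hC t ht) 2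
  have hco : ∀ j m : ℕ, ∫ t in Set.Icc (0:ℝ) 1, g t * haar1 (j:ℤ) m t
      = ∫ t, G t * haar1 (j:ℤ) m t := by
    intro j m
    rw [← integral_indicator measurableSet_Icc]
    congr 1; ext t; simp only [hGdef, Set.indicator]; split_ifs <;> simp
  have hr : ∫⁻ t in Set.Ioc (0:ℝ) 1, ENNReal.ofReal (g t ^ 2)
      = ENNReal.ofReal (∫ t in Set.Ioc (0:ℝ) 1, G t ^ 2) := by
    rw [ofReal_integral_eq_lintegral_ofReal hG2.integrableOn
      (Filter.Eventually.of_forall fun t => sq_nonneg _)]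
    refine setLIntegral_congr_fun measurableSet_Ioc fun t ht => ?_
    simp [hGdef, Set.indicator_of_mem (Set.Ioc_subset_Icc_self ht)]
  rw [hr, ENNReal.tsum_eq_iSup_nat]
  refine iSup_le fun J => ?_
  simp_rw [hco]
  refine le_trans (le_of_eq ?_) (ENNReal.ofReal_le_ofReal (bessel_real G hGi hG2 J))
  rw [ENNReal.ofReal_sum_of_nonneg fun j _ => Finset.sum_nonneg fun m _ => by positivity]
  refine Finset.sum_congr rfl fun j _ => ?_
  rw [ENNReal.ofReal_sum_of_nonneg fun m _ => by positivity]

lemma measurable_haar1 (j : ℤ) (m : ℕ) : Measurable (haar1 j m) := by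
  unfold haar1
  by_cases hj : j = -1
  · simp only [hj, if_true]
    exact Measurable.ite measurableSet_Ico measurable_const measurable_const
  · simp only [hj, if_false]
    exact Measurable.ite measurableSet_Ico measurable_const
      (Measurable.ite measurableSet_Ico measurable_const measurable_const)

lemma abs_haar1_le (j : ℤ) (m : ℕ) (x : ℝ) : |haar1 j m x| ≤ 1 := by
  unfold haar1
  split_ifs <;> simp

lemma measurable_haarFn (d : ℕ) (j : Fin d → ℤ) (m : Fin d → ℕ) : Measurable (haarFn d j m) := by
  unfold haarFn
  exact Finset.measurable_prod _ fun i _ => (measurable_haar1 _ _).comp (measurable_pi_apply i)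

lemma abs_haarFn_le (d : ℕ) (j : Fin d → ℤ) (m : Fin d → ℕ) (x : Fin d → ℝ) :
    |haarFn d j m x| ≤ 1 := by
  unfold haarFn
  rw [Finset.abs_prod]
  exact Finset.prod_le_one (fun _ _ => abs_nonneg _) fun _ _ => abs_haar1_le _ _ _

lemma measurableSet_unitCube (d : ℕ) : MeasurableSet (unitCube d) :=
  MeasurableSet.univ_pi fun _ => measurableSet_Icc

lemma volume_unitCube (d : ℕ) : volume (unitCube d) = 1 := by
  unfold unitCube
  rw [volume_pi_pi]
  simp

/-- Bounded measurable functions on the cube. -/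
def Nice (d : ℕ) (f : (Fin d → ℝ) → ℝ) : Prop :=
  Measurable f ∧ ∃ C : ℝ, ∀ x ∈ unitCube d, |f x| ≤ C

lemma abs_mul_haarFn_le {d : ℕ} {f : (Fin d → ℝ) → ℝ} {C : ℝ} (j : Fin d → ℤ) (m : Fin d → ℕ)
    (x : Fin d → ℝ) (h : |f x| ≤ C) : |f x * haarFn d j m x| ≤ C := by
  rw [abs_mul]
  calc |f x| * |haarFn d j m x| ≤ |f x| * 1 :=
        mul_le_mul_of_nonneg_left (abs_haarFn_le _ _ _ _) (abs_nonneg _)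
    _ ≤ C := by simpa using h

lemma Nice.integrable {d : ℕ} {f : (Fin d → ℝ) → ℝ} (hf : Nice d f)
    (j : Fin d → ℤ) (m : Fin d → ℕ) :
    IntegrableOn (fun x => f x * haarFn d j m x) (unitCube d) := by
  obtain ⟨hm, C, hC⟩ := hf
  refine Measure.integrableOn_of_bounded (M := C) (by simp [volume_unitCube])
    (hm.mul (measurable_haarFn d j m)).aestronglyMeasurable ?_
  exact (ae_restrict_iff' (measurableSet_unitCube d)).2
    (Filter.Eventually.of_forall fun x hx => abs_mul_haarFn_le j m x (hC x hx))

lemma abs_haarCoeff_le {d : ℕ} {f : (Fin d → ℝ) → ℝ} {C : ℝ} (hC : ∀ x ∈ unitCube d, |f x| ≤ C)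
    (j : Fin d → ℤ) (m : Fin d → ℕ) : |haarCoeff d f j m| ≤ C := by
  unfold haarCoeff
  have := norm_setIntegral_le_of_norm_le_const (μ := volume) (s := unitCube d) (C := C)
    (f := fun x => f x * haarFn d j m x) (by simp [volume_unitCube])
    (fun x hx => abs_mul_haarFn_le j m x (hC x hx))
  simpa [Measure.real, volume_unitCube] using this

lemma measurable_snoc (d : ℕ) :
    Measurable fun p : ℝ × (Fin d → ℝ) => (Fin.snoc p.2 p.1 : Fin (d+1) → ℝ) := by
  rw [measurable_pi_iff]
  intro i
  refine Fin.lastCases ?_ (fun i => ?_) i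
  · simpa using measurable_fst
  · simp only [Fin.snoc_castSucc]
    exact (measurable_pi_apply i).comp measurable_snd

lemma snoc_mem_unitCube {d : ℕ} (x : Fin d → ℝ) (t : ℝ) :
    (Fin.snoc x t : Fin (d+1) → ℝ) ∈ unitCube (d+1) ↔ t ∈ Set.Icc (0:ℝ) 1 ∧ x ∈ unitCube d := by
  simp only [unitCube, Set.mem_univ_pi, Fin.forall_fin_succ', Fin.snoc_castSucc, Fin.snoc_last]
  tauto

lemma haarFn_snoc {d : ℕ} (j' : Fin d → ℕ) (j : ℕ) (m' : Fin d → ℕ) (m : ℕ)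
    (x : Fin d → ℝ) (t : ℝ) :
    haarFn (d+1) (fun i => (((Fin.snoc j' j : Fin (d+1) → ℕ) i : ℕ) : ℤ)) (Fin.snoc m' m)
      (Fin.snoc x t) = haarFn d (fun i => (j' i : ℤ)) m' x * haar1 (j:ℤ) m t := by
  unfold haarFn
  rw [Fin.prod_univ_castSucc]
  simp

lemma haarCoeff_snoc {d : ℕ} {f : (Fin (d+1) → ℝ) → ℝ} (hf : Nice (d+1) f)
    (j' : Fin d → ℕ) (j : ℕ) (m' : Fin d → ℕ) (m : ℕ) :
    haarCoeff (d+1) f (fun i => (((Fin.snoc j' j : Fin (d+1) → ℕ) i : ℕ) : ℤ)) (Fin.snoc m' m)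
      = ∫ t in Set.Icc (0:ℝ) 1,
          haarCoeff d (fun x => f (Fin.snoc x t)) (fun i => (j' i : ℤ)) m' * haar1 (j:ℤ) m t := by
  have hint := hf.integrable (fun i => (((Fin.snoc j' j : Fin (d+1) → ℕ) i : ℕ) : ℤ))
    (Fin.snoc m' m)
  unfold haarCoeff
  set e : ℝ × (Fin d → ℝ) ≃ᵐ (Fin (d+1) → ℝ) :=
    (MeasurableEquiv.piFinSuccAbove (fun _ => ℝ) (Fin.last d)).symm with he
  have hem : MeasurePreserving e :=
    (volume_preserving_piFinSuccAbove (fun _ : Fin (d + 1) => ℝ) (Fin.last d)).symm _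
  have hev : ∀ p, e p = Fin.snoc p.2 p.1 := by
    intro p
    exact Fin.insertNth_last' p.1 p.2
  have hpre : e ⁻¹' (unitCube (d+1)) = Set.Icc (0:ℝ) 1 ×ˢ unitCube d := by
    ext p
    rw [Set.mem_preimage, hev, snoc_mem_unitCube, Set.mem_prod]
  rw [← hem.map_eq, setIntegral_map_equiv, hpre, Measure.volume_eq_prod, setIntegral_prod]
  · refine integral_congr_ae (Filter.Eventually.of_forall fun t => ?_)
    simp only [hev, haarFn_snoc]
    rw [← integral_mul_const]
    simp only [mul_assoc]
  · rw [← hem.map_eq, integrableOn_map_equiv, hpre] at hint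
    exact hint

lemma Nice.slice {d : ℕ} {f : (Fin (d+1) → ℝ) → ℝ} (hf : Nice (d+1) f) {t : ℝ}
    (ht : t ∈ Set.Icc (0:ℝ) 1) : Nice d (fun x => f (Fin.snoc x t)) := by
  obtain ⟨hm, C, hC⟩ := hf
  refine ⟨hm.comp ((measurable_snoc d).comp measurable_prodMk_left), C, fun x hx => ?_⟩
  exact hC _ ((snoc_mem_unitCube x t).2 ⟨ht, hx⟩)

lemma measurable_haarCoeff_section {d : ℕ} {f : (Fin (d+1) → ℝ) → ℝ} (hf : Measurable f)
    (j : Fin d → ℤ) (m : Fin d → ℕ) :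
    Measurable fun t => haarCoeff d (fun x => f (Fin.snoc x t)) j m := by
  unfold haarCoeff
  have : StronglyMeasurable fun p : ℝ × (Fin d → ℝ) => f (Fin.snoc p.2 p.1) * haarFn d j m p.2 :=
    ((hf.comp (measurable_snoc d)).mul
      ((measurable_haarFn d j m).comp measurable_snd)).stronglyMeasurable
  exact (this.integral_prod_right' (ν := volume.restrict (unitCube d))).measurable

lemma sum_Dfin0_snoc {d : ℕ} (j' : Fin d → ℕ) (j : ℕ) (F : (Fin (d+1) → ℕ) → ℝ≥0∞) :
    ∑ m ∈ Dfin0 (d+1) (Fin.snoc j' j), F m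
      = ∑ m' ∈ Dfin0 d j', ∑ m ∈ Finset.range (2^j), F (Fin.snoc m' m) := by
  rw [← Finset.sum_product']
  symm
  refine Finset.sum_bij' (fun p _ => (Fin.snoc p.1 p.2 : Fin (d+1) → ℕ))
    (fun m _ => (Fin.init m, m (Fin.last d))) ?_ ?_ ?_ ?_ ?_
  · intro p hp
    simp only [Finset.mem_product, Dfin0, Fintype.mem_piFinset, Fin.forall_fin_succ',
      Fin.snoc_castSucc, Fin.snoc_last] at hp ⊢
    exact hp
  · intro p hp
    simp only [Finset.mem_product, Dfin0, Fintype.mem_piFinset, Fin.forall_fin_succ',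
      Fin.snoc_castSucc, Fin.snoc_last] at hp ⊢
    exact hp
  · intro p _; simp
  · intro p _; simp
  · intro p _; rfl

lemma dNormSq_succ_le {d : ℕ} {f : (Fin (d+1) → ℝ) → ℝ} (hf : Nice (d+1) f) :
    dNormSq (d+1) f ≤ ∫⁻ t in Set.Ioc (0:ℝ) 1, dNormSq d (fun x => f (Fin.snoc x t)) := by
  have hmeas : ∀ (j : Fin d → ℕ) (m : Fin d → ℕ), Measurable fun t => ENNReal.ofReal
      ((2:ℝ) ^ (∑ i, j i) * (haarCoeff d (fun x => f (Fin.snoc x t)) (fun i => (j i : ℤ)) m)^2) :=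
    fun j m => (((measurable_haarCoeff_section hf.1 _ m).pow_const 2).const_mul _).ennreal_ofReal
  unfold dNormSq
  rw [lintegral_tsum fun j => (Finset.measurable_sum _ fun m _ => hmeas j m).aemeasurable]
  rw [← (Fin.snocEquiv (fun _ : Fin (d+1) => ℕ)).tsum_eq, ENNReal.tsum_prod', ENNReal.tsum_comm]
  refine ENNReal.tsum_le_tsum fun j' => ?_
  rw [lintegral_finsetSum _ fun m _ => hmeas j' m]
  have : ∀ j : ℕ, (Fin.snocEquiv (fun _ : Fin (d+1) => ℕ)) (j, j') = Fin.snoc j' j := fun j => rfl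
  simp only [this, sum_Dfin0_snoc]
  rw [Summable.tsum_finsetSum fun _ _ => ENNReal.summable]
  refine Finset.sum_le_sum fun m' _ => ?_
  obtain ⟨hm, C, hC⟩ := hf
  have hb := bessel_enn (fun t => haarCoeff d (fun x => f (Fin.snoc x t)) (fun i => (j' i : ℤ)) m')
    (measurable_haarCoeff_section hm _ m') C
    (fun t ht => abs_haarCoeff_le (fun x hx => hC _ ((snoc_mem_unitCube x t).2 ⟨ht, hx⟩)) _ _)
  have h2 : ∀ a : ℝ, ENNReal.ofReal ((2:ℝ) ^ (∑ i, j' i) * a)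
      = ENNReal.ofReal ((2:ℝ) ^ (∑ i, j' i)) * ENNReal.ofReal a :=
    fun a => ENNReal.ofReal_mul (by positivity)
  have hs : ∀ j : ℕ, ∑ i, (Fin.snoc j' j : Fin (d+1) → ℕ) i = ∑ i, j' i + j := by
    intro j; rw [Fin.sum_univ_castSucc]; simp
  simp only [hs, haarCoeff_snoc ⟨hm, C, hC⟩, pow_add, mul_assoc, h2, ← Finset.mul_sum]
  rw [ENNReal.tsum_mul_left, lintegral_const_mul]
  · gcongr
  · exact ((measurable_haarCoeff_section hm _ m').pow_const 2).ennreal_ofReal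

lemma dNormSq_const_mul {d : ℕ} (c : ℝ) (f : (Fin d → ℝ) → ℝ) :
    dNormSq d (fun x => c * f x) = ENNReal.ofReal (c^2) * dNormSq d f := by
  unfold dNormSq
  rw [← ENNReal.tsum_mul_left]
  refine tsum_congr fun j => ?_
  rw [Finset.mul_sum]
  refine Finset.sum_congr rfl fun m _ => ?_
  rw [← ENNReal.ofReal_mul (sq_nonneg c)]
  congr 1
  have : haarCoeff d (fun x => c * f x) (fun i => (j i : ℤ)) m
      = c * haarCoeff d f (fun i => (j i : ℤ)) m := by
    unfold haarCoeff
    rw [← integral_const_mul]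
    simp only [mul_assoc]
  rw [this]; ring

lemma prod_mem_Icc {d : ℕ} {x : Fin d → ℝ} (hx : x ∈ unitCube d) : |∏ i, x i| ≤ 1 := by
  rw [Finset.abs_prod]
  refine Finset.prod_le_one (fun _ _ => abs_nonneg _) fun i _ => ?_
  have := hx i (Set.mem_univ i)
  rw [abs_of_nonneg this.1]; exact this.2

lemma measurable_prodFn (d : ℕ) : Measurable fun x : Fin d → ℝ => ∏ i, x i :=
  Finset.measurable_prod _ fun i _ => measurable_pi_apply i

lemma nice_prod (d : ℕ) : Nice d (fun x => ∏ i, x i) :=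
  ⟨measurable_prodFn d, 1, fun _ hx => prod_mem_Icc hx⟩

lemma dNormSq_prod_le (d : ℕ) : dNormSq d (fun x => ∏ i, x i) ≤ 1 := by
  induction d with
  | zero =>
    unfold dNormSq
    rw [tsum_eq_single default (fun j hj => absurd (Subsingleton.elim _ _) hj)]
    have h1 : ∀ m, haarCoeff 0 (fun x => ∏ i, x i) (fun i => ((default : Fin 0 → ℕ) i : ℤ)) m
        = 1 := by
      intro m
      simp [haarCoeff, haarFn, Measure.real, volume_unitCube]
    simp only [h1]
    simp [Dfin0]
  | succ d ih =>
    refine (dNormSq_succ_le (nice_prod (d+1))).trans ?_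
    calc ∫⁻ t in Set.Ioc (0:ℝ) 1, dNormSq d (fun x => ∏ i, (Fin.snoc x t : Fin (d+1) → ℝ) i)
        ≤ ∫⁻ t in Set.Ioc (0:ℝ) 1, 1 := by
          refine setLIntegral_mono measurable_const fun t ht => ?_
          have : (fun x : Fin d → ℝ => ∏ i, (Fin.snoc x t : Fin (d+1) → ℝ) i)
              = fun x => t * ∏ i, x i := by
            ext x; rw [Fin.prod_univ_castSucc]; simp [mul_comm]
          rw [this, dNormSq_const_mul]
          refine mul_le_one' ?_ ih
          rw [ENNReal.ofReal_le_one]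
          exact pow_le_one₀ ht.1.le ht.2
      _ = 1 := by simp

lemma dNormSq_add_le {d : ℕ} {f g : (Fin d → ℝ) → ℝ} (hf : Nice d f) (hg : Nice d g)
    {M : ℝ} (hM : 0 < M) (h1 : dNormSq d f ≤ ENNReal.ofReal (M^2)) (h2 : dNormSq d g ≤ 1) :
    dNormSq d (fun x => f x + g x) ≤ ENNReal.ofReal ((M+1)^2) := by
  have key : dNormSq d (fun x => f x + g x) ≤
      ENNReal.ofReal ((M+1)/M) * dNormSq d f + ENNReal.ofReal (M+1) * dNormSq d g := by
    unfold dNormSq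
    rw [← ENNReal.tsum_mul_left, ← ENNReal.tsum_mul_left, ← ENNReal.tsum_add]
    refine ENNReal.tsum_le_tsum fun j => ?_
    rw [Finset.mul_sum, Finset.mul_sum, ← Finset.sum_add_distrib]
    refine Finset.sum_le_sum fun m _ => ?_
    rw [← ENNReal.ofReal_mul (by positivity), ← ENNReal.ofReal_mul (by positivity),
      ← ENNReal.ofReal_add (by positivity) (by positivity)]
    refine ENNReal.ofReal_le_ofReal ?_
    have : haarCoeff d (fun x => f x + g x) (fun i => (j i : ℤ)) m
      = haarCoeff d f (fun i => (j i : ℤ)) m + haarCoeff d g (fun i => (j i : ℤ)) m := by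
      unfold haarCoeff
      rw [← integral_add (hf.integrable _ m) (hg.integrable _ m)]
      simp only [add_mul]
    rw [this]
    set a := haarCoeff d f (fun i => (j i : ℤ)) m
    set b := haarCoeff d g (fun i => (j i : ℤ)) m
    have hab : (a+b)^2 ≤ (M+1)/M * a^2 + (M+1) * b^2 := by
      have : (M+1)/M * a^2 + (M+1) * b^2 - (a+b)^2 = (a - M*b)^2 / M := by
        field_simp; ring
      have h3 : 0 ≤ (a - M*b)^2 / M := by positivity
      linarith
    calc (2:ℝ) ^ (∑ i, j i) * (a+b)^2
        ≤ (2:ℝ) ^ (∑ i, j i) * ((M+1)/M * a^2 + (M+1) * b^2) := by gcongr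
      _ = _ := by ring
  refine key.trans ?_
  calc _ ≤ ENNReal.ofReal ((M+1)/M) * ENNReal.ofReal (M^2) + ENNReal.ofReal (M+1) * 1 := by gcongr
    _ = ENNReal.ofReal ((M+1)^2) := by
      rw [← ENNReal.ofReal_mul (by positivity), mul_one,
        ← ENNReal.ofReal_add (by positivity) (by positivity)]
      congr 1; field_simp

open scoped Classical in
lemma natCard_eq (N : ℕ) (p : ℕ → Prop) :
    Nat.card {k : Fin N // p k} = ∑ k ∈ Finset.range N, if p k then 1 else 0 := by
  rw [Nat.card_eq_fintype_card, Fintype.card_subtype, Finset.card_filter,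
    ← Fin.sum_univ_eq_sum_range (fun k => if p k then 1 else 0) N]

open scoped Classical in
lemma natCard_eq_card (N : ℕ) (p : ℕ → Prop) :
    Nat.card {k : Fin N // p k} = ((Finset.range N).filter p).card := by
  rw [natCard_eq, Finset.card_filter]

lemma nice_discSeq (d : ℕ) (S : ℕ → Fin d → ℝ) (N : ℕ) : Nice d (discSeq d S N) := by
  classical
  refine ⟨?_, 2, fun x hx => ?_⟩
  · unfold discSeq
    refine Measurable.sub (Measurable.div_const ?_ _) (measurable_prodFn d)
    have : (fun x : Fin d → ℝ => ((Nat.card {k : Fin N // ∀ i, S k i < x i} : ℕ) : ℝ))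
        = fun x => ∑ k ∈ Finset.range N, if ∀ i, S k i < x i then (1:ℝ) else 0 := by
      ext x
      rw [natCard_eq N (fun k => ∀ i, S k i < x i)]
      push_cast; rfl
    rw [this]
    refine Finset.measurable_sum _ fun k _ => Measurable.ite ?_ measurable_const measurable_const
    have : {x : Fin d → ℝ | ∀ i, S k i < x i} = ⋂ i, {x | S k i < x i} := by
      ext x; simp
    rw [this]
    exact MeasurableSet.iInter fun i => measurableSet_lt measurable_const (measurable_pi_apply i)
  · unfold discSeq
    have h1 := prod_mem_Icc hx
    have h2 : (Nat.card {k : Fin N // ∀ i, S k i < x i} : ℝ) ≤ N := by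
      rw [natCard_eq_card N (fun k => ∀ i, S k i < x i)]
      have h5 : ((Finset.range N).filter (fun k => ∀ i, S k i < x i)).card ≤ N :=
        (Finset.card_filter_le _ _).trans (by simp)
      refine le_trans (le_of_eq ?_) (Nat.cast_le.2 h5)
      congr!
    have h3 : (Nat.card {k : Fin N // ∀ i, S k i < x i} : ℝ) / N ≤ 1 :=
      div_le_one_of_le₀ h2 (by positivity)
    have h4 : 0 ≤ (Nat.card {k : Fin N // ∀ i, S k i < x i} : ℝ) / N := by positivity
    rw [abs_le] at h1 ⊢
    constructor <;> linarith [h1.1, h1.2]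

lemma discSeq_slice (d : ℕ) (S : ℕ → Fin d → ℝ) (N : ℕ) (hN : 1 ≤ N) (t : ℝ)
    (ht : t ∈ Set.Ioc (0:ℝ) 1) (n : ℕ) (hn : n = ⌈(N:ℝ) * t⌉₊) (x : Fin d → ℝ) :
    (N:ℝ) * discSeq (d+1) (fun k => Fin.snoc (S k) ((k:ℝ)/(N:ℝ))) N (Fin.snoc x t)
      = n * discSeq d S n x + ((n:ℝ) - N * t) * ∏ i, x i := by
  classical
  have hNp : (0:ℝ) < N := by exact_mod_cast hN
  have hnp : (0:ℝ) < n := by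
    rw [hn]; exact_mod_cast Nat.ceil_pos.2 (mul_pos hNp ht.1)
  have hcard : Nat.card {k : Fin N // ∀ i, (Fin.snoc (S k) ((k:ℝ)/(N:ℝ)) : Fin (d+1) → ℝ) i
        < (Fin.snoc x t : Fin (d+1) → ℝ) i}
      = Nat.card {k : Fin n // ∀ i, S k i < x i} := by
    rw [natCard_eq_card N (fun k => ∀ i, (Fin.snoc (S k) ((k:ℝ)/(N:ℝ)) : Fin (d+1) → ℝ) i
        < (Fin.snoc x t : Fin (d+1) → ℝ) i), natCard_eq_card n (fun k => ∀ i, S k i < x i)]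
    congr 1
    ext k
    simp only [Finset.mem_filter, Finset.mem_range, Fin.forall_fin_succ', Fin.snoc_castSucc,
      Fin.snoc_last]
    rw [hn, Nat.lt_ceil, div_lt_iff₀ hNp]
    constructor
    · rintro ⟨_, h1, h2⟩
      exact ⟨by linarith, h1⟩
    · rintro ⟨h1, h2⟩
      refine ⟨?_, h2, by linarith⟩
      have : (k:ℝ) < N := by nlinarith [ht.2]
      exact_mod_cast this
  unfold discSeq
  rw [hcard, Fin.prod_univ_castSucc]
  simp only [Fin.snoc_castSucc, Fin.snoc_last]
  field_simp
  ring

lemma dNorm_le_of_sq {d : ℕ} {f : (Fin d → ℝ) → ℝ} {c M : ℝ} (hc : 0 ≤ c) (hM : 0 ≤ M) :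
    ENNReal.ofReal c * dNorm d f ≤ ENNReal.ofReal M ↔
      dNormSq d (fun x => c * f x) ≤ ENNReal.ofReal (M^2) := by
  have hsq : dNorm d f ^ 2 = dNormSq d f := by
    unfold dNorm
    rw [← ENNReal.rpow_natCast, ← ENNReal.rpow_mul]
    norm_num
  rw [dNormSq_const_mul, ← hsq, ENNReal.ofReal_pow hc, ENNReal.ofReal_pow hM, ← mul_pow]
  exact (ENNReal.pow_le_pow_left_iff two_ne_zero).symm

/-- Proinov-type transference: for every sequence `S` in `[0,1)^d` and
every `N`, there is `n ∈ {1,…,N}` with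
`n‖D_S^n | 𝒟₀^d‖ + 1 ≥ N‖D_{P_{N,d+1}} | 𝒟₀^{d+1}‖`, where `P_{N,d+1}` consists of the
points `(y_k, k/N)`, `k = 0,…,N-1`. -/
theorem proinov_transference (d : ℕ) (hd : 0 < d) (S : ℕ → Fin d → ℝ)
    (hS : ∀ k, S k ∈ unitCubeIco d) :
    ∀ N : ℕ, 1 ≤ N → ∃ n : ℕ, 1 ≤ n ∧ n ≤ N ∧
      (N : ℝ≥0∞) * dNorm (d+1) (discSeq (d+1)
          (fun k => Fin.snoc (S k) ((k:ℝ)/(N:ℝ))) N) ≤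
        (n : ℝ≥0∞) * dNorm d (discSeq d S n) + 1 := by
  intro N hN
  obtain ⟨n, hnmem, hmax⟩ := Finset.exists_max_image (Finset.Icc 1 N)
    (fun n : ℕ => (n : ℝ≥0∞) * dNorm d (discSeq d S n)) ⟨1, by simp [hN]⟩
  rw [Finset.mem_Icc] at hnmem
  refine ⟨n, hnmem.1, hnmem.2, ?_⟩
  by_cases htop : (n : ℝ≥0∞) * dNorm d (discSeq d S n) = ⊤
  · rw [htop]; simp
  refine ENNReal.le_of_forall_pos_le_add fun ε hε _ => ?_
  set M : ℝ := ((n : ℝ≥0∞) * dNorm d (discSeq d S n)).toReal + ε with hMdef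
  have hM : 0 < M := by
    have : 0 ≤ ((n : ℝ≥0∞) * dNorm d (discSeq d S n)).toReal := ENNReal.toReal_nonneg
    have : (0:ℝ) < ε := by exact_mod_cast hε
    linarith
  have hMv : ENNReal.ofReal (M+1) = (n : ℝ≥0∞) * dNorm d (discSeq d S n) + 1 + ε := by
    rw [hMdef, ENNReal.ofReal_add (by positivity) zero_le_one,
      ENNReal.ofReal_add ENNReal.toReal_nonneg (by positivity), ENNReal.ofReal_toReal htop]
    simp [add_right_comm]
  have hle : ∀ k : ℕ, 1 ≤ k → k ≤ N →
      dNormSq d (fun x => (k:ℝ) * discSeq d S k x) ≤ ENNReal.ofReal (M^2) := by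
    intro k h1 h2
    rw [← dNorm_le_of_sq (by positivity) hM.le, ENNReal.ofReal_natCast]
    refine (hmax k (Finset.mem_Icc.2 ⟨h1, h2⟩)).trans ?_
    rw [hMdef, ENNReal.ofReal_add ENNReal.toReal_nonneg (by positivity),
      ENNReal.ofReal_toReal htop]
    exact le_self_add
  rw [← hMv, ← ENNReal.ofReal_natCast N, dNorm_le_of_sq (by positivity) (by positivity)]
  have hnice : ∀ (e : ℕ) (c : ℝ) (f : (Fin e → ℝ) → ℝ), Nice e f → Nice e (fun x => c * f x) := by
    rintro e c f ⟨hm, C, hC⟩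
    refine ⟨hm.const_mul c, |c| * C, fun x hx => ?_⟩
    rw [abs_mul]
    exact mul_le_mul_of_nonneg_left (hC x hx) (abs_nonneg _)
  refine (dNormSq_succ_le (hnice _ _ _ (nice_discSeq _ _ _))).trans ?_
  calc _ ≤ ∫⁻ t in Set.Ioc (0:ℝ) 1, ENNReal.ofReal ((M+1)^2) := by
        refine setLIntegral_mono measurable_const fun t ht => ?_
        have hNp : (0:ℝ) < N := by exact_mod_cast hN
        have h1 : 1 ≤ ⌈(N:ℝ) * t⌉₊ := Nat.ceil_pos.2 (mul_pos hNp ht.1)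
        have h2 : ⌈(N:ℝ) * t⌉₊ ≤ N := Nat.ceil_le.2 (by nlinarith [ht.2])
        have h3 := Nat.le_ceil ((N:ℝ) * t)
        have h4 := Nat.ceil_lt_add_one (mul_pos hNp ht.1).le
        simp only [discSeq_slice d S N hN t ht _ rfl]
        refine dNormSq_add_le (hnice _ _ _ (nice_discSeq _ _ _)) (hnice _ _ _ (nice_prod d)) hM
          (hle _ h1 h2) ?_
        rw [dNormSq_const_mul]
        refine mul_le_one' ?_ (dNormSq_prod_le d)
        rw [ENNReal.ofReal_le_one]
        exact pow_le_one₀ (by linarith) (by linarith)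
    _ = _ := by simp

end
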